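/- Let V_r := φ(C^{r+1}_*) ⊂ ℝ^r and let Z_{r,m} be an m-element subset of V_r chosen uniformly at random. Then α(r+1, m) = P[0 ∉ conv(Z_{r,m}) | Z_{r,m} ∩ (−Z_{r,m}) = ∅]. -/

import Mathlib

open Finset Filter MeasureTheory

open scoped Classical

noncomputable section

/-- The vertex set `{0,1}^d` of the 0/1-cube, as a finite subset of `ℝ^d`. -/
def cube01 (d : ℕ) : Finset (Fin d → ℝ) :=
  (Finset.univ : Finset (Fin d → Bool)).image (fun f i => if f i then 1 else 0)

/-- The vertex set `{-1,+1}^d` of the `±1`-cube, as a finite subset of `ℝ^d`. -/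
def pmCube (d : ℕ) : Finset (Fin d → ℝ) :=
  (Finset.univ : Finset (Fin d → Bool)).image (fun f i => if f i then 1 else -1)

/-- The all-one vector `𝟙 ∈ ℝ^d`. -/
def allOne (d : ℕ) : Fin d → ℝ := fun _ => 1

/-- `C^d_* = {-1,+1}^d \ {-𝟙, 𝟙}`. -/
def pmCubeStar (d : ℕ) : Finset (Fin d → ℝ) :=
  (pmCube d) \ {-(allOne d), allOne d}

/-- `{v,w}` spans an edge (a one-dimensional face) of the polytope `P`:
`v ≠ w` and the segment `[v,w]` is an (exposed) face of `P`. -/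
def IsEdge {d : ℕ} (P : Set (Fin d → ℝ)) (v w : Fin d → ℝ) : Prop :=
  v ≠ w ∧ IsExposed ℝ P (segment ℝ v w)

/-- The number of edges of the graph of the polytope `conv X`. -/
noncomputable def edgeCount {d : ℕ} (X : Finset (Fin d → ℝ)) : ℕ :=
  ((X.powersetCard 2).filter (fun e =>
      ∃ v w, e = {v, w} ∧ IsEdge (convexHull ℝ (X : Set (Fin d → ℝ))) v w)).card

/-- The density of the graph of the polytope `conv X` (whose vertex set is `X`
when `X` consists of 0/1- or `±1`-points): number of edges divided by `C(|X|,2)`. -/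
noncomputable def graphDensity {d : ℕ} (X : Finset (Fin d → ℝ)) : ℝ :=
  (edgeCount X : ℝ) / (X.card.choose 2 : ℝ)

/-- The expected graph-density of the convex hull of a uniformly random
`n`-element subset of `{0,1}^d`. -/
noncomputable def expDensity (d n : ℕ) : ℝ :=
  (∑ X ∈ (cube01 d).powersetCard n, graphDensity X) /
    (((cube01 d).powersetCard n).card : ℝ)

/-- The Hamming distance of `v, w ∈ ℝ^d`. -/
def hdist {d : ℕ} (v w : Fin d → ℝ) : ℕ :=
  (Finset.univ.filter (fun i => v i ≠ w i)).card

/-- `C(v,w)`: the points of the `±1`-cube agreeing with `v` and `w` wherever these agree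
(the vertex set of the smallest face of the cube containing `v` and `w`). -/
def cubeFace {d : ℕ} (v w : Fin d → ℝ) : Finset (Fin d → ℝ) :=
  (pmCube d).filter (fun x => ∀ i, v i = w i → x i = v i)

/-- `C_*(v,w) = C(v,w) \ {v,w}`. -/
def cubeFaceStar {d : ℕ} (v w : Fin d → ℝ) : Finset (Fin d → ℝ) :=
  (cubeFace v w) \ {v, w}

/-- The long-edge probability `τ(k,m)`: the probability that for a uniformly random
`m`-element subset `Y ⊆ C^k_*`, `conv Y ∩ conv{-𝟙,𝟙} = ∅`. -/
noncomputable def tau (k m : ℕ) : ℝ :=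
  ((((pmCubeStar k).powersetCard m).filter (fun Y =>
      convexHull ℝ (Y : Set (Fin k → ℝ)) ∩ segment ℝ (-(allOne k)) (allOne k) = ∅)).card : ℝ) /
    ((((pmCubeStar k).powersetCard m)).card : ℝ)

/-- `Y ∩ (-Y) = ∅`. -/
def NoAntipodal {k : ℕ} (Y : Finset (Fin k → ℝ)) : Prop := ∀ y ∈ Y, -y ∉ Y

/-- `α(k,m)`: the conditional probability that `conv Y ∩ conv{-𝟙,𝟙} = ∅`
given `Y ∩ (-Y) = ∅`, for a uniformly random `m`-element subset `Y ⊆ C^k_*`. -/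
noncomputable def alpha (k m : ℕ) : ℝ :=
  ((((pmCubeStar k).powersetCard m).filter (fun (Y : Finset (Fin k → ℝ)) =>
      convexHull ℝ (Y : Set (Fin k → ℝ)) ∩ segment ℝ (-(allOne k)) (allOne k) = ∅ ∧
        NoAntipodal Y)).card : ℝ) /
    ((((pmCubeStar k).powersetCard m).filter (fun Y => NoAntipodal Y)).card : ℝ)

/-- The sample space for a uniformly random `n`-element subset `X ⊆ {-1,+1}^d`
together with a uniformly random `2`-element subset `{v,w} ⊆ X`. -/
def edgeSpace (d n : ℕ) : Finset (Finset (Fin d → ℝ) × Finset (Fin d → ℝ)) :=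
  (((pmCube d).powersetCard n) ×ˢ ((pmCube d).powersetCard 2)).filter (fun p => p.2 ⊆ p.1)

/-- The event that the chosen pair `{v,w}` is an edge of `conv X`. -/
def EdgeEvent {d : ℕ} (p : Finset (Fin d → ℝ) × Finset (Fin d → ℝ)) : Prop :=
  ∃ v w, p.2 = {v, w} ∧ IsEdge (convexHull ℝ (p.1 : Set (Fin d → ℝ))) v w

/-- The event that the chosen pair `{v,w}` satisfies `dist(v,w) = k`. -/
def DistEvent {d : ℕ} (k : ℕ) (p : Finset (Fin d → ℝ) × Finset (Fin d → ℝ)) : Prop :=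
  ∃ v w, v ≠ w ∧ p.2 = {v, w} ∧ hdist v w = k

/-- The event that the chosen pair `{v,w}` satisfies `dist(v,w) = k` and
`#(X ∩ C_*(v,w)) = m`. -/
def DistCapEvent {d : ℕ} (k m : ℕ) (p : Finset (Fin d → ℝ) × Finset (Fin d → ℝ)) : Prop :=
  ∃ v w, v ≠ w ∧ p.2 = {v, w} ∧ hdist v w = k ∧ (p.1 ∩ cubeFaceStar v w).card = m

/-- The edge probability `π(d,n)`. -/
noncomputable def piEdge (d n : ℕ) : ℝ :=
  (((edgeSpace d n).filter (fun p => EdgeEvent p)).card : ℝ) / ((edgeSpace d n).card : ℝ)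

/-- The conditional edge probability `π_k(d,n)` given `dist(v,w) = k`. -/
noncomputable def piEdgeK (d n k : ℕ) : ℝ :=
  (((edgeSpace d n).filter (fun p => EdgeEvent p ∧ DistEvent k p)).card : ℝ) /
    (((edgeSpace d n).filter (fun p => DistEvent k p)).card : ℝ)

/-- `φ : ℝ^{r+1} → ℝ^r`: the orthogonal projection onto the hyperplane
`H_𝟙 = {x : 𝟙ᵀx = 0}` (namely `x ↦ x - ((𝟙ᵀx)/(r+1))·𝟙`), followed by the
projection to the first `r` coordinates. -/
noncomputable def phi (r : ℕ) (x : Fin (r + 1) → ℝ) : Fin r → ℝ :=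
  fun i => x i.castSucc - (∑ j, x j) / (r + 1 : ℝ)

/-- The vector configuration `V_r = φ(C^{r+1}_*)`. -/
noncomputable def Vr (r : ℕ) : Finset (Fin r → ℝ) := (pmCubeStar (r + 1)).image (phi r)

/-- The half configuration `V_r^+ = φ({v ∈ C^{r+1}_* : v_{r+1} = +1})`. -/
noncomputable def VrPlus (r : ℕ) : Finset (Fin r → ℝ) :=
  (((pmCubeStar (r + 1)).filter (fun v => v (Fin.last r) = 1))).image (phi r)

/-- The number of sign vectors `ε ∈ {-1,+1}^S` with `0 ∉ conv{ε_s · s : s ∈ S}`. -/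
noncomputable def signCount {r : ℕ} (S : Finset (Fin r → ℝ)) : ℕ :=
  ((Finset.univ : Finset (↥S → Bool)).filter (fun ε =>
      (0 : Fin r → ℝ) ∉ convexHull ℝ
        (Set.range fun s : ↥S => (if ε s then (1 : ℝ) else -1) • (s : Fin r → ℝ)))).card

/-- `α(S)`: the probability that `0 ∉ conv{ε_s · s : s ∈ S}` for a uniformly random
sign vector `ε ∈ {-1,+1}^S`. -/
noncomputable def alphaSet {r : ℕ} (S : Finset (Fin r → ℝ)) : ℝ :=
  (signCount S : ℝ) / ((Finset.univ : Finset (↥S → Bool)).card : ℝ)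

/-- The complement `ℝ^r \ ⋃_{s ∈ S} H(s)` of the hyperplane arrangement `ℋ(S)`. -/
def arrComplement {r : ℕ} (S : Finset (Fin r → ℝ)) : Set (Fin r → ℝ) :=
  {x | ∀ s ∈ S, ∑ i, s i * x i ≠ 0}

/-- `χ(S)`: the number of chambers (connected components of the complement)
of the hyperplane arrangement `ℋ(S)`. -/
noncomputable def chi {r : ℕ} (S : Finset (Fin r → ℝ)) : ℕ :=
  Nat.card (ConnectedComponents ↥(arrComplement S))

/-- `b(p,q) = ∑_{i=0}^p C(q,i)`. -/
def bFn (p q : ℕ) : ℕ := ∑ i ∈ Finset.range (p + 1), q.choose i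

/-!
The kernel of `φ` is the line `ℝ𝟙`, and this line meets the cube `[-1,1]^{r+1} ⊇ conv Y` exactly in
the segment `[-𝟙,𝟙]`. So `conv Y` meets the segment iff it meets `ker φ`, i.e. iff
`0 ∈ φ(conv Y) = conv φ(Y)`. Two distinct `±1`-vectors differ by a multiple of `𝟙` only if they are
`𝟙` and `-𝟙`, so `φ` is injective on `C^{r+1}_*`; being odd, it preserves antipodality, and
`Y ↦ φ(Y)` matches the favourable `m`-sets on both sides.
-/

section LinearGeometry

theorem convexHull_inter_ker_eq_empty_iff {𝕜 E F : Type*} [Semiring 𝕜] [PartialOrder 𝕜]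
    [AddCommMonoid E] [AddCommMonoid F] [Module 𝕜 E] [Module 𝕜 F] (f : E →ₗ[𝕜] F) (s : Set E) :
    convexHull 𝕜 s ∩ LinearMap.ker f = ∅ ↔ (0 : F) ∉ convexHull 𝕜 (f '' s) := by
  rw [← f.image_convexHull, Set.eq_empty_iff_forall_notMem]
  simp

variable {𝕜 ι E : Type*} [Field 𝕜] [LinearOrder 𝕜] [IsStrictOrderedRing 𝕜]

theorem segment_neg_self [AddCommGroup E] [Module 𝕜 E] (v : E) :
    segment 𝕜 (-v) v = (fun t : 𝕜 => t • v) '' Set.Icc (-1) 1 := by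
  have h := image_segment 𝕜 (LinearMap.toSpanSingleton 𝕜 E v).toAffineMap (-1) 1
  rw [segment_eq_Icc (by simp)] at h
  simpa using h.symm

theorem segment_neg_one_one_eq_Icc_inter_span :
    segment 𝕜 (-1 : ι → 𝕜) 1 = Set.Icc (-1) 1 ∩ Submodule.span 𝕜 {(1 : ι → 𝕜)} := by
  rw [segment_neg_self]
  ext x
  simp only [Set.mem_image, Set.mem_inter_iff, SetLike.mem_coe, Submodule.mem_span_singleton]
  constructor
  · rintro ⟨t, ⟨hl, hu⟩, rfl⟩
    exact ⟨⟨fun _ => by simpa using hl, fun _ => by simpa using hu⟩, t, rfl⟩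
  · rintro ⟨⟨hl, hu⟩, t, rfl⟩
    rcases isEmpty_or_nonempty ι with _ | ⟨⟨i⟩⟩
    · exact ⟨0, by simp, Subsingleton.elim _ _⟩
    · exact ⟨t, ⟨by simpa using hl i, by simpa using hu i⟩, rfl⟩

theorem convexHull_inter_segment_neg_one_one {s : Set (ι → 𝕜)} (hs : s ⊆ Set.Icc (-1) 1) :
    convexHull 𝕜 s ∩ segment 𝕜 (-1) 1 =
      convexHull 𝕜 s ∩ Submodule.span 𝕜 {(1 : ι → 𝕜)} := by
  have hhull : convexHull 𝕜 s ⊆ Set.Icc (-1) 1 := convexHull_min hs (convex_Icc _ _)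
  rw [segment_neg_one_one_eq_Icc_inter_span, ← Set.inter_assoc, Set.inter_eq_left.2 hhull]

end LinearGeometry

section Counting

variable {α β : Type*} [DecidableEq β] {f : α → β} {s : Finset α}

theorem powersetCard_image_of_injOn (hf : Set.InjOn f s) (m : ℕ) :
    (s.image f).powersetCard m = (s.powersetCard m).image (Finset.image f) := by
  ext u
  simp only [mem_powersetCard, mem_image, subset_image_iff]
  constructor
  · rintro ⟨⟨t, hts, rfl⟩, hcard⟩
    exact ⟨t, ⟨hts, by rwa [card_image_of_injOn (hf.mono hts)] at hcard⟩, rfl⟩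
  · rintro ⟨t, ⟨hts, hcard⟩, rfl⟩
    exact ⟨⟨t, hts, rfl⟩, by rwa [card_image_of_injOn (hf.mono hts)]⟩

theorem card_filter_powersetCard_eq_of_injOn (hf : Set.InjOn f s) (m : ℕ)
    {P : Finset α → Prop} {Q : Finset β → Prop} [DecidablePred P] [DecidablePred Q]
    (hPQ : ∀ t ⊆ s, (P t ↔ Q (t.image f))) :
    #{t ∈ s.powersetCard m | P t} = #{u ∈ (s.image f).powersetCard m | Q u} := by
  have hfilter : {t ∈ s.powersetCard m | P t} = {t ∈ s.powersetCard m | Q (t.image f)} :=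
    filter_congr fun t ht => hPQ t (mem_powersetCard.1 ht).1
  have hsub : {t ∈ s.powersetCard m | Q (t.image f)} ⊆ s.powerset :=
    fun t ht => mem_powerset.2 (mem_powersetCard.1 (mem_filter.1 ht).1).1
  rw [powersetCard_image_of_injOn hf, filter_image, hfilter,
    card_image_of_injOn ((image_injOn_powerset_of_injOn hf).mono (coe_subset.2 hsub))]

end Counting

theorem noAntipodal_iff_image {k l : ℕ} {f : (Fin k → ℝ) → Fin l → ℝ} {s Y : Finset (Fin k → ℝ)}
    (hodd : Function.Odd f) (hinj : Set.InjOn f s) (hneg : ∀ x ∈ s, -x ∈ s) (hY : Y ⊆ s) :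
    NoAntipodal Y ↔ NoAntipodal (Y.image f) := by
  have hmem : ∀ y ∈ Y, (-y ∈ Y ↔ -f y ∈ Y.image f) := fun y hy => by
    rw [← hodd y, ← mem_coe (s := Y.image f), coe_image]
    exact (hinj.mem_image_iff hY (hneg y (hY hy))).symm
  rw [NoAntipodal, NoAntipodal, forall_mem_image]
  exact forall₂_congr fun y hy => not_congr (hmem y hy)

section Cube

variable {d : ℕ} {x y : Fin d → ℝ}

theorem mem_pmCube : x ∈ pmCube d ↔ ∀ i, x i = 1 ∨ x i = -1 := by
  simp only [pmCube, mem_image, mem_univ, true_and]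
  constructor
  · rintro ⟨f, rfl⟩ i
    by_cases h : f i <;> simp [h]
  · intro h
    refine ⟨fun i => decide (x i = 1), funext fun i => ?_⟩
    rcases h i with h | h <;> norm_num [h]

theorem mem_pmCubeStar :
    x ∈ pmCubeStar d ↔ x ∈ pmCube d ∧ x ≠ -allOne d ∧ x ≠ allOne d := by
  simp [pmCubeStar]

theorem pmCubeStar_subset_pmCube : pmCubeStar d ⊆ pmCube d := sdiff_subset

theorem neg_mem_pmCubeStar (hx : x ∈ pmCubeStar d) : -x ∈ pmCubeStar d := by
  rw [mem_pmCubeStar, mem_pmCube] at hx ⊢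
  obtain ⟨hcube, hne_neg, hne⟩ := hx
  refine ⟨fun i => ?_, neg_inj.not.2 hne, fun h => hne_neg (neg_eq_iff_eq_neg.1 h)⟩
  simpa [neg_eq_iff_eq_neg] using (hcube i).symm

theorem coe_pmCube_subset_Icc : (pmCube d : Set (Fin d → ℝ)) ⊆ Set.Icc (-1) 1 := by
  intro x hx
  rw [mem_coe, mem_pmCube] at hx
  constructor <;> intro i <;> rcases hx i with h | h <;> simp [h]

theorem eq_allOne_of_forall_lt (hx : x ∈ pmCube d) (hy : y ∈ pmCube d) (hlt : ∀ i, y i < x i) :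
    x = allOne d := by
  rw [mem_pmCube] at hx hy
  funext i
  refine (hx i).resolve_right fun hxi => ?_
  rcases hy i with hyi | hyi <;> linarith [hlt i]

theorem eq_of_sub_mem_span_allOne (hx : x ∈ pmCubeStar d) (hy : y ∈ pmCubeStar d)
    (hxy : x - y ∈ Submodule.span ℝ {allOne d}) : x = y := by
  rw [mem_pmCubeStar] at hx hy
  obtain ⟨t, ht⟩ := Submodule.mem_span_singleton.1 hxy
  have hdiff : ∀ i, x i - y i = t := fun i => by simpa [allOne] using (congrFun ht i).symm
  rcases lt_trichotomy t 0 with hneg | rfl | hpos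
  · exact absurd (eq_allOne_of_forall_lt hy.1 hx.1 fun i => by linarith [hdiff i]) hy.2.2
  · exact funext fun i => sub_eq_zero.1 (hdiff i)
  · exact absurd (eq_allOne_of_forall_lt hx.1 hy.1 fun i => by linarith [hdiff i]) hx.2.2

end Cube

section Projection

variable (r : ℕ)

/-- The map `φ`, bundled as a linear map to give access to its kernel and to its action on convex
hulls. -/
def phiLinear : (Fin (r + 1) → ℝ) →ₗ[ℝ] (Fin r → ℝ) where
  toFun := phi r
  map_add' x y := by
    ext i
    simp only [phi, Pi.add_apply, sum_add_distrib]
    ring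
  map_smul' c x := by
    ext i
    simp only [phi, Pi.smul_apply, smul_eq_mul, ← mul_sum, RingHom.id_apply]
    ring

theorem coe_phiLinear : ⇑(phiLinear r) = phi r := rfl

theorem phi_odd : Function.Odd (phi r) := map_neg (phiLinear r)

theorem ker_phiLinear :
    LinearMap.ker (phiLinear r) = Submodule.span ℝ {allOne (r + 1)} := by
  have hr : (r + 1 : ℝ) ≠ 0 := by positivity
  refine le_antisymm (fun x hx => ?_) ?_
  · let μ := (∑ j, x j) / (r + 1 : ℝ)
    have hcastSucc : ∀ i : Fin r, x i.castSucc - μ = 0 := congrFun hx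
    have hsum : ∑ j, (x j - μ) = 0 := by
      simp only [sum_sub_distrib, sum_const, card_univ, Fintype.card_fin, nsmul_eq_mul, μ]
      push_cast
      field_simp
      ring
    have hlast : x (Fin.last r) - μ = 0 := by
      simpa only [Fin.sum_univ_castSucc, hcastSucc, sum_const_zero, zero_add] using hsum
    have hconst : ∀ i, x i - μ = 0 := Fin.lastCases hlast hcastSucc
    refine Submodule.mem_span_singleton.2 ⟨μ, funext fun i => ?_⟩
    simpa [allOne] using (sub_eq_zero.1 (hconst i)).symm
  · rw [Submodule.span_singleton_le_iff_mem, LinearMap.mem_ker, coe_phiLinear]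
    funext i
    simp [phi, allOne, hr]

theorem phi_injOn_pmCubeStar : Set.InjOn (phi r) (pmCubeStar (r + 1)) := by
  intro x hx y hy hxy
  refine eq_of_sub_mem_span_allOne hx hy ?_
  rwa [← ker_phiLinear, LinearMap.sub_mem_ker_iff]

variable {r} {Y : Finset (Fin (r + 1) → ℝ)}

theorem noAntipodal_iff_image_phi (hY : Y ⊆ pmCubeStar (r + 1)) :
    NoAntipodal Y ↔ NoAntipodal (Y.image (phi r)) :=
  noAntipodal_iff_image (phi_odd r) (phi_injOn_pmCubeStar r) (fun _ => neg_mem_pmCubeStar) hY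

theorem convexHull_inter_segment_allOne_eq_empty_iff (hY : Y ⊆ pmCube (r + 1)) :
    convexHull ℝ (Y : Set (Fin (r + 1) → ℝ)) ∩ segment ℝ (-allOne (r + 1)) (allOne (r + 1)) = ∅ ↔
      (0 : Fin r → ℝ) ∉ convexHull ℝ (Y.image (phi r) : Set (Fin r → ℝ)) := by
  have hIcc : (Y : Set (Fin (r + 1) → ℝ)) ⊆ Set.Icc (-1) 1 :=
    (coe_subset.2 hY).trans coe_pmCube_subset_Icc
  have hinter : convexHull ℝ (Y : Set (Fin (r + 1) → ℝ)) ∩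
      segment ℝ (-allOne (r + 1)) (allOne (r + 1)) =
        convexHull ℝ (Y : Set (Fin (r + 1) → ℝ)) ∩ LinearMap.ker (phiLinear r) := by
    rw [ker_phiLinear]
    exact convexHull_inter_segment_neg_one_one hIcc
  rw [hinter, convexHull_inter_ker_eq_empty_iff, coe_phiLinear, coe_image]

end Projection

-- STATEMENT 8
theorem statement8 (r m : ℕ) :
    alpha (r + 1) m =
      ((((Vr r).powersetCard m).filter (fun (Z : Finset (Fin r → ℝ)) =>
          (0 : Fin r → ℝ) ∉ convexHull ℝ (Z : Set (Fin r → ℝ)) ∧ NoAntipodal Z)).card : ℝ) /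
        ((((Vr r).powersetCard m).filter (fun Z => NoAntipodal Z)).card : ℝ) := by
  rw [alpha, Vr]
  congr 2
  · exact card_filter_powersetCard_eq_of_injOn (phi_injOn_pmCubeStar r) m fun Y hY =>
      and_congr (convexHull_inter_segment_allOne_eq_empty_iff (hY.trans pmCubeStar_subset_pmCube))
        (noAntipodal_iff_image_phi hY)
  · exact card_filter_powersetCard_eq_of_injOn (phi_injOn_pmCubeStar r) m fun Y hY =>
      noAntipodal_iff_image_phi hY

end
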